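/- Let Σ_H be positive semidefinite with eigenvalues λ_j(Σ_H) in decreasing order, let X̃_1,…,X̃_n be i.i.d. N(0, Σ_H), let P_n be the orthogonal projection onto span(X̃_1,…,X̃_n), and define R_k = Σ_{j > k} λ_j(Σ_H). Then for every k < n - 1: R_n ≤ E[Tr(Σ_H(I - P_n))] ≤ ((n-1)/(n-k-1)) · R_k. -/

import Mathlib

open Matrix MeasureTheory ProbabilityTheory BigOperators

/-! In the eigenbasis of `Σ_H` the risk is `∑ c, eig c * N c c`, where `N = Uᵀ (I - P) U` is again
an orthogonal projection. Its diagonal lies in `[0, 1]` and sums to at least `d - n`, so the risk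
is smallest when that mass sits on the smallest eigenvalues: this is the lower bound.

For the upper bound, `N j j` is the squared distance from `e_j` to the row space of the rotated
data matrix, whose columns `Y c ∼ N(0, eig c • I)` are independent. Let `S` be the set of the top
`k` coordinates. For `j ∈ S`, a linear combination of the rows that hits `e_j` exactly on the
coordinates of `S` leaves an error only on the tail columns. Taking for its coefficients the
projection of `Y j` onto the orthogonal complement of the other columns of `S`, normalized, and
averaging first over the tail columns and then over `Y j`, bounds `eig j * E[N j j]` by the tail
sum times the mean of an inverse chi-squared variable with at least `n - k + 1` degrees of
freedom, that is by `R_k / (n - k - 1)`. Summing over `S` and bounding `N c c ≤ 1` off `S` gives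
the factor `1 + k / (n - k - 1) = (n - 1) / (n - k - 1)`. -/

open Module (finrank)
open scoped ENNReal

section InverseMoment

theorem lintegral_Ioi_exp_mul_norm_sq {E : Type*} [NormedAddCommGroup E] (x : E) :
    ∫⁻ u in Set.Ioi (1 : ℝ), ENNReal.ofReal (Real.exp ((1 - u) / 2 * ‖x‖ ^ 2)) =
      2 * (‖x‖ₑ ^ 2)⁻¹ := by
  rcases eq_or_ne x 0 with rfl | hx
  · simp
  have rate_neg : -(‖x‖ ^ 2 / 2) < 0 := neg_lt_zero.2 (by positivity)
  have exp_split (u : ℝ) : Real.exp ((1 - u) / 2 * ‖x‖ ^ 2) =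
      Real.exp (‖x‖ ^ 2 / 2) * Real.exp (-(‖x‖ ^ 2 / 2) * u) := by
    rw [← Real.exp_add]
    ring_nf
  simp_rw [exp_split]
  rw [← ofReal_integral_eq_lintegral_ofReal ((integrableOn_exp_mul_Ioi rate_neg 1).const_mul _)
    (.of_forall fun _ ↦ by positivity), integral_const_mul, integral_exp_mul_Ioi rate_neg,
    ← ofReal_norm, ← ENNReal.ofReal_pow (norm_nonneg x),
    ← ENNReal.ofReal_inv_of_pos (by positivity), ← ENNReal.ofReal_ofNat,
    ← ENNReal.ofReal_mul zero_le_two, mul_one, neg_div_neg_eq, mul_div_assoc', ← Real.exp_add,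
    add_neg_cancel, Real.exp_zero, one_div_div, div_eq_mul_inv]

theorem lintegral_Ioi_rpow_neg_half {m : ℕ} (hm : 2 < m) :
    ∫⁻ u in Set.Ioi (1 : ℝ), ENNReal.ofReal (u ^ (-(m / 2 : ℝ))) =
      2 * ((m - 2 : ℕ) : ℝ≥0∞)⁻¹ := by
  have hm' : (2 : ℝ) < m := by exact_mod_cast hm
  have exponent_lt : -(m / 2 : ℝ) < -1 := by linarith
  rw [← ofReal_integral_eq_lintegral_ofReal (integrableOn_Ioi_rpow_of_lt exponent_lt one_pos)
    ((ae_restrict_iff' measurableSet_Ioi).2 <| .of_forall fun u hu ↦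
      Real.rpow_nonneg (zero_le_one.trans (le_of_lt hu)) _),
    integral_Ioi_rpow_of_lt exponent_lt one_pos, Real.one_rpow, ← ENNReal.ofReal_natCast,
    Nat.cast_sub hm.le, Nat.cast_ofNat, ← ENNReal.ofReal_inv_of_pos (by linarith),
    ← ENNReal.ofReal_ofNat, ← ENNReal.ofReal_mul zero_le_two]
  congr 1
  rw [show -(m / 2 : ℝ) + 1 = -((m - 2) / 2) by ring, neg_div_neg_eq, one_div_div, div_eq_mul_inv]

theorem integral_exp_mul_sq_gaussianReal (u : ℝ) :
    ∫ x, Real.exp ((1 - u) / 2 * x ^ 2) ∂gaussianReal 0 1 = (√u)⁻¹ := by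
  have density_mul (x : ℝ) : gaussianPDFReal 0 1 x • Real.exp ((1 - u) / 2 * x ^ 2) =
      (√(2 * Real.pi))⁻¹ * Real.exp (-(u / 2) * x ^ 2) := by
    simp only [gaussianPDFReal, smul_eq_mul, NNReal.coe_one, mul_one, sub_zero]
    rw [mul_assoc, ← Real.exp_add]
    ring_nf
  simp_rw [integral_gaussianReal_eq_integral_smul one_ne_zero, density_mul]
  rw [integral_const_mul, integral_gaussian, div_div_eq_mul_div, mul_comm Real.pi,
    Real.sqrt_div (by positivity), ← div_eq_inv_mul, div_div_cancel_left' (by positivity)]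

variable {E : Type*} [NormedAddCommGroup E] [InnerProductSpace ℝ E] [FiniteDimensional ℝ E]
  [MeasurableSpace E] [BorelSpace E]

theorem integral_exp_mul_norm_sq_stdGaussian {u : ℝ} (hu : 0 ≤ u) :
    ∫ x, Real.exp ((1 - u) / 2 * ‖x‖ ^ 2) ∂stdGaussian E = u ^ (-(finrank ℝ E / 2 : ℝ)) := by
  have exp_norm_sq (x : Fin (finrank ℝ E) → ℝ) :
      Real.exp ((1 - u) / 2 * ‖∑ i, x i • stdOrthonormalBasis ℝ E i‖ ^ 2) =
        ∏ i, Real.exp ((1 - u) / 2 * x i ^ 2) := by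
    rw [← Real.exp_sum, ← Finset.mul_sum, ← real_inner_self_eq_norm_sq,
      (stdOrthonormalBasis ℝ E).orthonormal.inner_sum]
    simp only [conj_trivial, ← pow_two]
  rw [stdGaussian, integral_map (Measurable.aemeasurable (by fun_prop)) (by fun_prop)]
  simp_rw [exp_norm_sq]
  rw [integral_fintype_prod_eq_pow (f := fun x : ℝ ↦ Real.exp ((1 - u) / 2 * x ^ 2)),
    integral_exp_mul_sq_gaussianReal, Fintype.card_fin, Real.sqrt_eq_rpow, ← Real.rpow_neg hu,
    ← Real.rpow_mul_natCast hu]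
  ring_nf

theorem lintegral_exp_mul_norm_sq_stdGaussian {u : ℝ} (hu : 0 < u) :
    ∫⁻ x, ENNReal.ofReal (Real.exp ((1 - u) / 2 * ‖x‖ ^ 2)) ∂stdGaussian E =
      ENNReal.ofReal (u ^ (-(finrank ℝ E / 2 : ℝ))) := by
  rw [← integral_exp_mul_norm_sq_stdGaussian hu.le, ofReal_integral_eq_lintegral_ofReal]
  · refine .of_integral_ne_zero ?_
    rw [integral_exp_mul_norm_sq_stdGaussian hu.le]
    positivity
  · exact .of_forall fun _ ↦ (Real.exp_pos _).le

-- `1 / ‖x‖²` is a mixture over `u > 1` of exponentials in `‖x‖²`, whose Gaussian means are known.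
theorem lintegral_inv_enorm_sq_stdGaussian (hE : 2 < finrank ℝ E) :
    ∫⁻ x, (‖x‖ₑ ^ 2)⁻¹ ∂stdGaussian E = ((finrank ℝ E - 2 : ℕ) : ℝ≥0∞)⁻¹ := by
  refine (ENNReal.mul_right_inj two_ne_zero ENNReal.ofNat_ne_top).1 ?_
  calc 2 * ∫⁻ x, (‖x‖ₑ ^ 2)⁻¹ ∂stdGaussian E
      = ∫⁻ x : E, (∫⁻ u in Set.Ioi (1 : ℝ),
          ENNReal.ofReal (Real.exp ((1 - u) / 2 * ‖x‖ ^ 2))) ∂stdGaussian E := by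
        rw [← lintegral_const_mul _ (by fun_prop)]
        simp_rw [lintegral_Ioi_exp_mul_norm_sq]
    _ = ∫⁻ u in Set.Ioi (1 : ℝ), (∫⁻ x : E,
          ENNReal.ofReal (Real.exp ((1 - u) / 2 * ‖x‖ ^ 2)) ∂stdGaussian E) :=
        lintegral_lintegral_swap (Measurable.aemeasurable (by unfold Function.uncurry; fun_prop))
    _ = ∫⁻ u in Set.Ioi (1 : ℝ), ENNReal.ofReal (u ^ (-(finrank ℝ E / 2 : ℝ))) :=
        setLIntegral_congr_fun measurableSet_Ioi fun u hu ↦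
          lintegral_exp_mul_norm_sq_stdGaussian (zero_lt_one.trans hu)
    _ = 2 * ((finrank ℝ E - 2 : ℕ) : ℝ≥0∞)⁻¹ := lintegral_Ioi_rpow_neg_half hE

end InverseMoment

section IsotropicGaussian

variable {E : Type*} [NormedAddCommGroup E] [InnerProductSpace ℝ E] [FiniteDimensional ℝ E]
  [MeasurableSpace E] [BorelSpace E]

variable (E) in
/-- The Gaussian law `N(0, σ² I)` on a Euclidean space, realized as the law of `σ • Z` for a
standard Gaussian `Z`, so that `σ = 0` gives the Dirac mass at `0`. -/
noncomputable def isotropicGaussian (σ : ℝ) : Measure E :=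
  (stdGaussian E).map (σ • ·)

instance (σ : ℝ) : IsProbabilityMeasure (isotropicGaussian E σ) :=
  Measure.isProbabilityMeasure_map (by fun_prop)

theorem charFun_isotropicGaussian (σ : ℝ) (t : E) :
    charFun (isotropicGaussian E σ) t = Complex.exp (-(σ ^ 2 * ‖t‖ ^ 2 : ℝ) / 2) := by
  rw [isotropicGaussian, charFun_map_smul, charFun_stdGaussian, norm_smul, Real.norm_eq_abs,
    ← Complex.ofReal_pow, mul_pow, sq_abs]

theorem lintegral_enorm_inner_sq_stdGaussian (l : E) :
    ∫⁻ x, ‖inner ℝ l x‖ₑ ^ 2 ∂stdGaussian E = ‖l‖ₑ ^ 2 := by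
  have memLp_inner : MemLp (innerSL ℝ l) 2 (stdGaussian E) :=
    IsGaussian.memLp_dual _ _ _ ENNReal.ofNat_ne_top
  have variance_inner := memLp_inner.ofReal_variance_eq
  rw [variance_dual_stdGaussian, evariance, integral_strongDual_stdGaussian, innerSL_apply_norm,
    ENNReal.ofReal_pow (norm_nonneg l), ofReal_norm] at variance_inner
  simpa only [sub_zero, innerSL_apply_apply] using variance_inner.symm

theorem lintegral_enorm_inner_sq_isotropicGaussian (σ : ℝ) (l : E) :
    ∫⁻ x, ‖inner ℝ l x‖ₑ ^ 2 ∂isotropicGaussian E σ = ‖σ‖ₑ ^ 2 * ‖l‖ₑ ^ 2 := by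
  rw [isotropicGaussian, lintegral_map (by fun_prop) (by fun_prop),
    ← lintegral_enorm_inner_sq_stdGaussian l, ← lintegral_const_mul _ (by fun_prop)]
  simp_rw [real_inner_smul_right, enorm_mul, mul_pow]

theorem map_orthogonalProjectionOnto_stdGaussian (W : Submodule ℝ E) :
    (stdGaussian E).map W.orthogonalProjectionOnto = stdGaussian W := by
  refine Measure.ext_of_charFun (funext fun t ↦ ?_)
  have charFun_coe := charFun_stdGaussian (E := E) t
  rw [charFun_apply] at charFun_coe
  rw [charFun_stdGaussian, charFun_apply, integral_map (by fun_prop) (by fun_prop),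
    Submodule.coe_norm, ← charFun_coe]
  simp_rw [Submodule.inner_orthogonalProjectionOnto_eq_of_mem_right]

theorem lintegral_inv_enorm_orthogonalProjectionOnto_sq_isotropicGaussian {σ : ℝ} (hσ : σ ≠ 0)
    {W : Submodule ℝ E} (hW : 2 < finrank ℝ W) :
    ∫⁻ x, (‖W.orthogonalProjectionOnto x‖ₑ ^ 2)⁻¹ ∂isotropicGaussian E σ =
      (‖σ‖ₑ ^ 2 * (finrank ℝ W - 2 : ℕ))⁻¹ := by
  have inv_enorm_smul_sq (y : W) : (‖σ • y‖ₑ ^ 2)⁻¹ = (‖σ‖ₑ ^ 2)⁻¹ * (‖y‖ₑ ^ 2)⁻¹ := by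
    rw [enorm_smul, mul_pow, ENNReal.mul_inv (by simp [hσ]) (by simp)]
  rw [isotropicGaussian, lintegral_map (by fun_prop) (by fun_prop)]
  simp_rw [map_smul, inv_enorm_smul_sq]
  rw [lintegral_const_mul _ (by fun_prop), ENNReal.mul_inv (by simp) (by simp),
    ← lintegral_inv_enorm_sq_stdGaussian hW, ← map_orthogonalProjectionOnto_stdGaussian,
    lintegral_map (by fun_prop) (by fun_prop)]

theorem ae_orthogonalProjectionOnto_ne_zero_isotropicGaussian {σ : ℝ} (hσ : σ ≠ 0)
    {W : Submodule ℝ E} (hW : 2 < finrank ℝ W) :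
    ∀ᵐ x ∂isotropicGaussian E σ, W.orthogonalProjectionOnto x ≠ 0 := by
  have moment_ne_top :
      ∫⁻ x, (‖W.orthogonalProjectionOnto x‖ₑ ^ 2)⁻¹ ∂isotropicGaussian E σ ≠ ∞ := by
    rw [lintegral_inv_enorm_orthogonalProjectionOnto_sq_isotropicGaussian hσ hW]
    exact ENNReal.inv_ne_top.2 (mul_ne_zero (by simp [hσ]) (Nat.cast_ne_zero.2 (by lia)))
  filter_upwards [ae_lt_top (by fun_prop) moment_ne_top] with x hx hx0
  simp [hx0] at hx

end IsotropicGaussian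

section RowSpace

variable {ι E : Type*} [Fintype ι] [DecidableEq ι] [NormedAddCommGroup E] [InnerProductSpace ℝ E]

/-- The squared distance from the `j`-th basis vector to the row space `{(⟪l, Y c⟫)_c | l}` of the
matrix with columns `Y c`. It is written as an infimum of functions continuous in `Y`, which makes
its measurability evident although the minimizing `l` does not depend continuously on `Y`. -/
noncomputable def rowSpaceSqDist (j : ι) (Y : ι → E) : ℝ≥0∞ :=
  ⨅ l : E, ∑ c, ‖(Pi.single j 1 : ι → ℝ) c - inner ℝ l (Y c)‖ₑ ^ 2

theorem rowSpaceSqDist_le_one (j : ι) (Y : ι → E) : rowSpaceSqDist j Y ≤ 1 := by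
  refine (iInf_le _ 0).trans_eq ?_
  rw [Finset.sum_eq_single j (fun c _ hc ↦ by simp [hc]) (by simp)]
  simp

theorem rowSpaceSqDist_le_sum_compl {S : Finset ι} {j : ι} (hj : j ∈ S) (Y : ι → E) {l : E}
    (hl : ∀ c ∈ S, inner ℝ l (Y c) = (Pi.single j 1 : ι → ℝ) c) :
    rowSpaceSqDist j Y ≤ ∑ c ∈ Sᶜ, ‖inner ℝ l (Y c)‖ₑ ^ 2 := by
  refine (iInf_le _ l).trans_eq ?_
  rw [← Finset.sum_add_sum_compl S, Finset.sum_eq_zero fun c hc ↦ by simp [hl c hc], zero_add]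
  refine Finset.sum_congr rfl fun c hc ↦ ?_
  have hcj : c ≠ j := by
    rintro rfl
    exact Finset.mem_compl.1 hc hj
  rw [Pi.single_eq_of_ne hcj, zero_sub, enorm_neg]

variable [FiniteDimensional ℝ E] [MeasurableSpace E] [BorelSpace E]

theorem measurable_rowSpaceSqDist (j : ι) : Measurable (rowSpaceSqDist j : (ι → E) → ℝ≥0∞) :=
  (upperSemicontinuous_iInf fun _ ↦ Continuous.upperSemicontinuous (by fun_prop)).measurable

theorem lmarginal_rowSpaceSqDist_le (ν : ι → Measure E) [∀ c, IsProbabilityMeasure (ν c)]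
    {S : Finset ι} {j : ι} (hj : j ∈ S) (Y : ι → E) {l : E}
    (hl : ∀ c ∈ S, inner ℝ l (Y c) = (Pi.single j 1 : ι → ℝ) c) :
    (∫⋯∫⁻_Sᶜ, rowSpaceSqDist j ∂ν) Y ≤ ∑ c ∈ Sᶜ, ∫⁻ y, ‖inner ℝ l y‖ₑ ^ 2 ∂ν c := by
  calc (∫⋯∫⁻_Sᶜ, rowSpaceSqDist j ∂ν) Y
      ≤ ∫⁻ y, ∑ c, ‖inner ℝ l (y c)‖ₑ ^ 2 ∂Measure.pi fun c : (Sᶜ : Finset ι) ↦ ν c := by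
        refine lintegral_mono fun y ↦
          (rowSpaceSqDist_le_sum_compl hj _ (l := l) fun c hc ↦ ?_).trans_eq ?_
        · simpa [Function.updateFinset, hc] using hl c hc
        · rw [← Finset.sum_coe_sort]
          simp [Function.updateFinset, -Finset.univ_eq_attach]
    _ = ∑ c : (Sᶜ : Finset ι), ∫⁻ y, ‖inner ℝ l y‖ₑ ^ 2 ∂ν c := by
        rw [lintegral_finsetSum _ fun c _ ↦ by fun_prop]
        exact Finset.sum_congr rfl fun c _ ↦ (measurePreserving_eval
          (fun c : (Sᶜ : Finset ι) ↦ ν c) c).lintegral_comp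
            (f := fun y ↦ ‖inner ℝ l y‖ₑ ^ 2) (by fun_prop)
    _ = ∑ c ∈ Sᶜ, ∫⁻ y, ‖inner ℝ l y‖ₑ ^ 2 ∂ν c :=
        Finset.sum_coe_sort Sᶜ fun c ↦ ∫⁻ y, ‖inner ℝ l y‖ₑ ^ 2 ∂ν c

-- The test vector is `p / ‖p‖²`, where `p` is the projection of `Y j` onto `W`.
theorem lmarginal_rowSpaceSqDist_isotropicGaussian_le (σ : ι → ℝ) {S : Finset ι} {j : ι}
    (hj : j ∈ S) (Y : ι → E) {W : Submodule ℝ E} (hW : ∀ c ∈ S.erase j, Y c ∈ Wᗮ)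
    (hp : W.orthogonalProjectionOnto (Y j) ≠ 0) :
    (∫⋯∫⁻_Sᶜ, rowSpaceSqDist j ∂fun c ↦ isotropicGaussian E (σ c)) Y ≤
      (∑ c ∈ Sᶜ, ‖σ c‖ₑ ^ 2) * (‖W.orthogonalProjectionOnto (Y j)‖ₑ ^ 2)⁻¹ := by
  set p := W.orthogonalProjectionOnto (Y j)
  have norm_ne : ‖p‖ ≠ 0 := norm_ne_zero_iff.2 hp
  have inner_Y (c : ι) (hc : c ∈ S) :
      inner ℝ ((‖p‖ ^ 2)⁻¹ • (p : E)) (Y c) = (Pi.single j 1 : ι → ℝ) c := by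
    rw [real_inner_smul_left]
    rcases eq_or_ne c j with rfl | hcj
    · rw [← Submodule.inner_orthogonalProjectionOnto_eq_of_mem_left, real_inner_self_eq_norm_sq,
        inv_mul_cancel₀ (pow_ne_zero 2 norm_ne), Pi.single_eq_same]
    · rw [W.inner_right_of_mem_orthogonal p.2 (hW c (Finset.mem_erase.2 ⟨hcj, hc⟩)), mul_zero,
        Pi.single_eq_of_ne hcj]
  have enorm_l : ‖(‖p‖ ^ 2)⁻¹ • (p : E)‖ₑ ^ 2 = (‖p‖ₑ ^ 2)⁻¹ := by
    have norm_l : ‖(‖p‖ ^ 2)⁻¹ • (p : E)‖ = ‖p‖⁻¹ := by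
      rw [norm_smul, norm_inv, norm_pow, norm_norm, Submodule.coe_norm]
      field_simp
    rw [← ofReal_norm, norm_l, ENNReal.ofReal_inv_of_pos (by positivity), ofReal_norm,
      ENNReal.inv_pow]
  refine (lmarginal_rowSpaceSqDist_le _ hj Y inner_Y).trans_eq ?_
  simp_rw [lintegral_enorm_inner_sq_isotropicGaussian, enorm_l, Finset.sum_mul]

theorem lmarginal_insert_rowSpaceSqDist_isotropicGaussian_le {σ : ι → ℝ} {S : Finset ι} {j : ι}
    (hj : j ∈ S) (hσ : σ j ≠ 0) (hS : S.card + 1 < finrank ℝ E) (Y : ι → E) :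
    (∫⋯∫⁻_insert j Sᶜ, rowSpaceSqDist j ∂fun c ↦ isotropicGaussian E (σ c)) Y ≤
      (∑ c ∈ Sᶜ, ‖σ c‖ₑ ^ 2) * (‖σ j‖ₑ ^ 2 * (finrank ℝ E - S.card - 1 : ℕ))⁻¹ := by
  set V : Submodule ℝ E := Submodule.span ℝ (Set.range fun c : S.erase j ↦ Y c)
  set W := Vᗮ
  have finrank_W : finrank ℝ E - S.card - 1 ≤ finrank ℝ W - 2 := by
    have finrank_V : finrank ℝ V ≤ (S.erase j).card :=
      (finrank_range_le_card _).trans_eq (Fintype.card_coe _)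
    have card_erase := Finset.card_erase_add_one hj
    have finrank_add : finrank ℝ V + finrank ℝ W = finrank ℝ E := V.finrank_add_finrank_orthogonal
    lia
  have two_lt_finrank_W : 2 < finrank ℝ W := by lia
  have others_mem (z : E) (c : ι) (hc : c ∈ S.erase j) : Function.update Y j z c ∈ Wᗮ := by
    rw [Function.update_of_ne (Finset.ne_of_mem_erase hc)]
    exact V.le_orthogonal_orthogonal (Submodule.subset_span ⟨⟨c, hc⟩, rfl⟩)
  rw [lmarginal_insert _ (measurable_rowSpaceSqDist j) (by simpa using hj)]
  calc ∫⁻ z, (∫⋯∫⁻_Sᶜ, rowSpaceSqDist j ∂fun c ↦ isotropicGaussian E (σ c))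
          (Function.update Y j z) ∂isotropicGaussian E (σ j)
      ≤ ∫⁻ z, (∑ c ∈ Sᶜ, ‖σ c‖ₑ ^ 2) * (‖W.orthogonalProjectionOnto z‖ₑ ^ 2)⁻¹
          ∂isotropicGaussian E (σ j) := by
        refine lintegral_mono_ae ?_
        filter_upwards [ae_orthogonalProjectionOnto_ne_zero_isotropicGaussian hσ two_lt_finrank_W]
          with z hz
        simpa only [Function.update_self] using lmarginal_rowSpaceSqDist_isotropicGaussian_le σ hj
          (Function.update Y j z) (others_mem z) (by rwa [Function.update_self])
    _ = (∑ c ∈ Sᶜ, ‖σ c‖ₑ ^ 2) * (‖σ j‖ₑ ^ 2 * (finrank ℝ W - 2 : ℕ))⁻¹ := by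
        rw [lintegral_const_mul _ (by fun_prop),
          lintegral_inv_enorm_orthogonalProjectionOnto_sq_isotropicGaussian hσ two_lt_finrank_W]
    _ ≤ (∑ c ∈ Sᶜ, ‖σ c‖ₑ ^ 2) * (‖σ j‖ₑ ^ 2 * (finrank ℝ E - S.card - 1 : ℕ))⁻¹ := by
        gcongr

theorem enorm_sq_mul_lintegral_rowSpaceSqDist_le (σ : ι → ℝ) {S : Finset ι} {j : ι}
    (hj : j ∈ S) (hS : S.card + 1 < finrank ℝ E) :
    ‖σ j‖ₑ ^ 2 * ∫⁻ Y, rowSpaceSqDist j Y ∂Measure.pi (fun c ↦ isotropicGaussian E (σ c)) ≤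
      (∑ c ∈ Sᶜ, ‖σ c‖ₑ ^ 2) * ((finrank ℝ E - S.card - 1 : ℕ) : ℝ≥0∞)⁻¹ := by
  rcases eq_or_ne (σ j) 0 with h0 | h0
  · simp [h0]
  set B := (∑ c ∈ Sᶜ, ‖σ c‖ₑ ^ 2) * (‖σ j‖ₑ ^ 2 * (finrank ℝ E - S.card - 1 : ℕ))⁻¹
  have lintegral_le : ∫⁻ Y, rowSpaceSqDist j Y
      ∂Measure.pi (fun c ↦ isotropicGaussian E (σ c)) ≤ B := by
    refine (lintegral_le_of_lmarginal_le (g := fun _ ↦ B) (insert j Sᶜ)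
      (measurable_rowSpaceSqDist j) measurable_const fun Y ↦ ?_).trans_eq (by simp)
    refine (lmarginal_insert_rowSpaceSqDist_isotropicGaussian_le hj h0 hS Y).trans_eq ?_
    simp [lmarginal, B]
  refine (mul_le_mul_right lintegral_le _).trans_eq ?_
  rw [mul_left_comm, ENNReal.mul_inv (by simp [h0]) (by simp),
    ENNReal.mul_inv_cancel_left (by simp [h0]) (by simp)]

-- Columns outside `S` only contribute through the trivial bound `rowSpaceSqDist ≤ 1`.
theorem sum_enorm_sq_mul_lintegral_rowSpaceSqDist_le (σ : ι → ℝ) {S : Finset ι}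
    (hS : S.card + 1 < finrank ℝ E) :
    ∑ c, ‖σ c‖ₑ ^ 2 *
        ∫⁻ Y, rowSpaceSqDist c Y ∂Measure.pi (fun c ↦ isotropicGaussian E (σ c)) ≤
      (1 + S.card / (finrank ℝ E - S.card - 1 : ℕ)) * ∑ c ∈ Sᶜ, ‖σ c‖ₑ ^ 2 := by
  rw [← Finset.sum_compl_add_sum S, add_mul, one_mul, div_eq_mul_inv, mul_assoc,
    mul_comm (_)⁻¹]
  refine add_le_add (Finset.sum_le_sum fun c _ ↦ ?_) ?_
  · refine mul_le_of_le_one_right' ((lintegral_mono fun Y ↦ rowSpaceSqDist_le_one c Y).trans ?_)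
    simp
  · rw [← nsmul_eq_mul]
    exact Finset.sum_le_card_nsmul _ _ _ fun j hj ↦ enorm_sq_mul_lintegral_rowSpaceSqDist_le σ hj hS

end RowSpace

section SampleColumns

theorem map_eq_pi_isotropicGaussian {Ω ι E : Type*} [MeasurableSpace Ω] [Fintype ι]
    [NormedAddCommGroup E] [InnerProductSpace ℝ E] [FiniteDimensional ℝ E] [MeasurableSpace E]
    [BorelSpace E] {μ : Measure Ω} [IsFiniteMeasure μ] (σ : ι → ℝ) {Y : Ω → ι → E}
    (hY : Measurable Y)
    (hY_gauss : ∀ t : ι → E, μ.map (fun ω ↦ ∑ c, inner ℝ (Y ω c) (t c)) =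
      gaussianReal 0 (∑ c, σ c ^ 2 * ‖t c‖ ^ 2).toNNReal) :
    μ.map Y = Measure.pi fun c ↦ isotropicGaussian E (σ c) := by
  rw [← charFun_eq_pi_iff]
  intro t
  calc charFun ((μ.map Y).map (WithLp.toLp 2)) t
      = charFun (μ.map fun ω ↦ ∑ c, inner ℝ (Y ω c) (t c)) 1 := by
        rw [charFun_apply, charFun_apply, Measure.map_map (by fun_prop) hY,
          integral_map (by fun_prop) (by fun_prop), integral_map (by fun_prop) (by fun_prop)]
        simp [PiLp.inner_apply]
    _ = Complex.exp (∑ c, -(σ c ^ 2 * ‖t c‖ ^ 2 : ℝ) / 2) := by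
        rw [hY_gauss, charFun_gaussianReal, Real.coe_toNNReal _ (by positivity),
          ← Finset.sum_div, Finset.sum_neg_distrib]
        push_cast
        ring_nf
    _ = ∏ c, charFun (isotropicGaussian E (σ c)) (t c) := by
        rw [Complex.exp_sum]
        simp_rw [charFun_isotropicGaussian]

variable {m d e : Type*}

/-- The `c`-th column of the data matrix whose rows are the samples `y i`. -/
def sampleColumn (y : m → d → ℝ) (c : d) : EuclideanSpace ℝ m :=
  WithLp.toLp 2 fun i ↦ y i c

theorem measurable_sampleColumn_mulVec [Fintype e] {Ω : Type*} [MeasurableSpace Ω]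
    (A : Matrix d e ℝ) {X : m → Ω → e → ℝ} (hX : ∀ i, Measurable (X i)) :
    Measurable fun ω ↦ sampleColumn fun i ↦ A *ᵥ X i ω := by
  unfold sampleColumn mulVec dotProduct
  fun_prop

variable [Fintype m] [Fintype d] [Fintype e]

theorem sum_inner_sampleColumn_mulVec (A : Matrix d e ℝ) (x : m → e → ℝ)
    (t : d → EuclideanSpace ℝ m) :
    ∑ c, inner ℝ (sampleColumn (fun i ↦ A *ᵥ x i) c) (t c) =
      ∑ i, (Aᵀ *ᵥ fun c ↦ t c i) ⬝ᵥ x i := by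
  simp_rw [PiLp.inner_apply, mulVec_transpose, ← dotProduct_mulVec]
  exact Finset.sum_comm

variable [DecidableEq d]

theorem sum_mulVec_dotProduct_mulVec_mulVec {U : Matrix e d ℝ} (hU : Uᵀ * U = 1) (a : d → ℝ)
    (t : d → EuclideanSpace ℝ m) :
    ∑ i, (U *ᵥ fun c ↦ t c i) ⬝ᵥ (U * diagonal a * Uᵀ) *ᵥ (U *ᵥ fun c ↦ t c i) =
      ∑ c, a c * ‖t c‖ ^ 2 := by
  have quadratic_form (w : d → ℝ) :
      (U *ᵥ w) ⬝ᵥ (U * diagonal a * Uᵀ) *ᵥ (U *ᵥ w) = ∑ c, a c * w c ^ 2 := by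
    rw [mulVec_mulVec, Matrix.mul_assoc, hU, Matrix.mul_one, ← mulVec_mulVec, dotProduct_mulVec,
      vecMul_mulVec, hU, vecMul_one, dotProduct]
    simp_rw [mulVec_diagonal]
    exact Finset.sum_congr rfl fun c _ ↦ by ring
  simp_rw [quadratic_form, EuclideanSpace.real_norm_sq_eq, Finset.mul_sum]
  exact Finset.sum_comm

theorem map_sampleColumn_eq_pi_isotropicGaussian {Ω : Type*} [MeasurableSpace Ω] {μ : Measure Ω}
    [IsFiniteMeasure μ] {U : Matrix e d ℝ} (hU : Uᵀ * U = 1) {a : d → ℝ} (ha : 0 ≤ a)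
    {X : m → Ω → e → ℝ} (hX : ∀ i, Measurable (X i))
    (hX_gauss : ∀ v : m → e → ℝ, μ.map (fun ω ↦ ∑ i, v i ⬝ᵥ X i ω) =
      gaussianReal 0 (∑ i, v i ⬝ᵥ (U * diagonal a * Uᵀ) *ᵥ v i).toNNReal) :
    μ.map (fun ω ↦ sampleColumn fun i ↦ Uᵀ *ᵥ X i ω) =
      Measure.pi fun c ↦ isotropicGaussian (EuclideanSpace ℝ m) √(a c) := by
  refine map_eq_pi_isotropicGaussian _ (measurable_sampleColumn_mulVec _ hX) fun t ↦ ?_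
  simp_rw [sum_inner_sampleColumn_mulVec, transpose_transpose, Real.sq_sqrt (ha _)]
  rw [hX_gauss, sum_mulVec_dotProduct_mulVec_mulVec hU]

end SampleColumns

section Projections

theorem isStarProjection_star_mul_mul {A : Type*} [Semiring A] [StarRing A] {p u : A}
    (hp : IsStarProjection p) (hu : u * star u = 1) : IsStarProjection (star u * p * u) where
  isIdempotentElem := by
    rw [IsIdempotentElem, mul_assoc, ← mul_assoc u, ← mul_assoc u, hu, one_mul, ← mul_assoc,
      mul_assoc (star u), hp.isIdempotentElem.eq]
  isSelfAdjoint := hp.isSelfAdjoint.conjugate' u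

variable {d : Type*} [Fintype d]

theorem trace_eq_rank_of_isIdempotentElem {K : Type*} [Field K] {P : Matrix d d K}
    (hP : IsIdempotentElem P) : P.trace = P.rank := by
  classical
  have toLin_idem : IsIdempotentElem P.toLin' := hP.map toLinAlgEquiv'
  rw [← trace_toLin'_eq, (LinearMap.IsIdempotentElem.isProj_range _ toLin_idem).trace,
    Matrix.rank, toLin'_apply']

theorem rank_le_card_of_mulVec_mem_span {K m : Type*} [Field K] [Fintype m] {P : Matrix d d K}
    {x : m → d → K} (hP : ∀ z, P *ᵥ z ∈ Submodule.span K (Set.range x)) :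
    P.rank ≤ Fintype.card m := by
  refine (Submodule.finrank_mono ?_).trans (finrank_range_le_card (R := K) x)
  rintro _ ⟨z, rfl⟩
  exact hP z

open scoped MatrixOrder in
theorem diag_mem_Icc_of_isStarProjection {N : Matrix d d ℝ} (hN : IsStarProjection N) (j : d) :
    N j j ∈ Set.Icc 0 1 := by
  classical
  have one_sub_diag := hN.one_sub_nonneg.posSemidef.diag_nonneg (i := j)
  rw [Matrix.sub_apply, one_apply_eq, sub_nonneg] at one_sub_diag
  exact ⟨hN.nonneg.posSemidef.diag_nonneg, one_sub_diag⟩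

variable [DecidableEq d]

open scoped MatrixOrder in
theorem diag_le_sum_single_sub_sq {N : Matrix d d ℝ} (hN : IsStarProjection N) {u : d → ℝ}
    (hu : N *ᵥ u = 0) (j : d) : N j j ≤ ∑ c, ((Pi.single j 1 : d → ℝ) c - u c) ^ 2 := by
  have hNT : Nᵀ = N := hN.isSelfAdjoint
  set w : d → ℝ := Pi.single j 1 - u
  have mulVec_w : N *ᵥ w = N *ᵥ Pi.single j 1 := by rw [mulVec_sub, hu, sub_zero]
  have quadratic_form : w ⬝ᵥ N *ᵥ w = N j j := by
    rw [mulVec_w, dotProduct_mulVec, ← mulVec_transpose, hNT, mulVec_w]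
    simp
  have nonneg := hN.one_sub_nonneg.posSemidef.dotProduct_mulVec_nonneg w
  rw [star_trivial, sub_mulVec, one_mulVec, dotProduct_sub, quadratic_form, sub_nonneg] at nonneg
  simp only [dotProduct, ← pow_two] at nonneg
  exact nonneg

theorem ofReal_diag_le_rowSpaceSqDist {m : Type*} [Fintype m] {N : Matrix d d ℝ}
    (hN : IsStarProjection N) {y : m → d → ℝ} (hy : ∀ i, N *ᵥ y i = 0) (j : d) :
    ENNReal.ofReal (N j j) ≤ rowSpaceSqDist j (sampleColumn y) := by
  refine le_iInf fun l ↦ ?_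
  have mulVec_row : N *ᵥ (fun c ↦ inner ℝ l (sampleColumn y c)) = 0 := by
    have row_eq : (fun c ↦ inner ℝ l (sampleColumn y c)) = ∑ i, l i • y i := by
      ext c
      simp [PiLp.inner_apply, sampleColumn, mul_comm]
    simp [row_eq, mulVec_sum, mulVec_smul, hy]
  refine (ENNReal.ofReal_le_ofReal (diag_le_sum_single_sub_sq hN mulVec_row j)).trans_eq ?_
  rw [ENNReal.ofReal_sum_of_nonneg fun c _ ↦ sq_nonneg _]
  simp_rw [← sq_abs (_ - _), ← Real.norm_eq_abs, ENNReal.ofReal_pow (norm_nonneg _), ofReal_norm]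

theorem trace_mul_diagonal_mul_mul {R : Type*} [CommSemiring R] (U V Q : Matrix d d R) (a : d → R) :
    (U * diagonal a * V * Q).trace = ∑ c, a c * (V * Q * U) c c := by
  rw [Matrix.mul_assoc, Matrix.mul_assoc, trace_mul_comm, Matrix.mul_assoc]
  simp [Matrix.trace, diagonal_mul]

theorem nonneg_of_posSemidef_mul_diagonal_mul_transpose {U : Matrix d d ℝ} (hU : Uᵀ * U = 1)
    {a : d → ℝ} (h : (U * diagonal a * Uᵀ).PosSemidef) : 0 ≤ a :=
  fun c ↦ posSemidef_diagonal_iff.1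
    ((IsUnit.of_mul_eq_one_right _ hU).posSemidef_star_right_conjugate_iff.1 h) c

end Projections

section RiskBounds

theorem sum_le_sum_mul_of_card_le_sum {ι R : Type*} [Fintype ι] [CommRing R] [LinearOrder R]
    [IsStrictOrderedRing R] {a q : ι → R} (ha : 0 ≤ a) (hq : ∀ c, q c ∈ Set.Icc 0 1) {T : Finset ι}
    (hT : ∀ i ∈ T, ∀ j ∉ T, a i ≤ a j) (hTq : T.card ≤ ∑ c, q c) :
    ∑ c ∈ T, a c ≤ ∑ c, a c * q c := by
  classical
  rcases T.eq_empty_or_nonempty with rfl | hne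
  · exact Finset.sum_nonneg fun c _ ↦ mul_nonneg (ha c) (hq c).1
  obtain ⟨i, hi, a_le⟩ := T.exists_max_image a hne
  have missing_mass_le : ∑ c ∈ T, (1 - q c) ≤ ∑ c ∈ Tᶜ, q c := by
    rw [Finset.sum_sub_distrib, Finset.sum_const, nsmul_one, sub_le_iff_le_add,
      Finset.sum_compl_add_sum]
    exact hTq
  have exchange : ∑ c ∈ T, a c * (1 - q c) ≤ ∑ c ∈ Tᶜ, a c * q c :=
    calc ∑ c ∈ T, a c * (1 - q c)
        ≤ ∑ c ∈ T, a i * (1 - q c) := Finset.sum_le_sum fun c hc ↦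
          mul_le_mul_of_nonneg_right (a_le c hc) (sub_nonneg.2 (hq c).2)
      _ = a i * ∑ c ∈ T, (1 - q c) := (Finset.mul_sum ..).symm
      _ ≤ a i * ∑ c ∈ Tᶜ, q c := mul_le_mul_of_nonneg_left missing_mass_le (ha i)
      _ = ∑ c ∈ Tᶜ, a i * q c := Finset.mul_sum ..
      _ ≤ ∑ c ∈ Tᶜ, a c * q c := Finset.sum_le_sum fun c hc ↦
          mul_le_mul_of_nonneg_right (hT i hi c (Finset.mem_compl.1 hc)) (hq c).1
  simp_rw [mul_sub, mul_one, Finset.sum_sub_distrib, sub_le_iff_le_add] at exchange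
  rwa [Finset.sum_compl_add_sum] at exchange

theorem one_add_div_eq_ofReal {n k : ℕ} (h : k + 1 < n) :
    (1 + k / (n - k - 1 : ℕ) : ℝ≥0∞) = ENNReal.ofReal (((n : ℝ) - 1) / (n - k - 1)) := by
  have cast_pos : (0 : ℝ) < (n - k - 1 : ℕ) := by
    rw [Nat.cast_pos]
    lia
  have cast_eq : (n : ℝ) - k - 1 = (n - k - 1 : ℕ) := by
    rw [Nat.sub_sub, Nat.cast_sub h.le]
    push_cast
    ring
  have ratio_eq : ((n : ℝ) - 1) / (n - k - 1) = 1 + k / (n - k - 1 : ℕ) := by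
    rw [one_add_div cast_pos.ne', ← cast_eq]
    ring_nf
  rw [ratio_eq, ENNReal.ofReal_add zero_le_one (by positivity), ENNReal.ofReal_one,
    ENNReal.ofReal_div_of_pos cast_pos, ENNReal.ofReal_natCast, ENNReal.ofReal_natCast]

variable {m d : Type*} [Fintype m] [Fintype d] [DecidableEq d] {U : Matrix d d ℝ} {a : d → ℝ}

theorem isStarProjection_transpose_mul_one_sub_mul (hU : Uᵀ * U = 1) {P : Matrix d d ℝ}
    (hP : IsStarProjection P) : IsStarProjection (Uᵀ * (1 - P) * U) :=
  isStarProjection_star_mul_mul hP.one_sub (mul_eq_one_comm.1 hU)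

theorem trace_transpose_mul_one_sub_mul (hU : Uᵀ * U = 1) {P : Matrix d d ℝ}
    (hP : IsStarProjection P) : (Uᵀ * (1 - P) * U).trace = Fintype.card d - P.rank := by
  rw [trace_mul_comm, ← Matrix.mul_assoc, mul_eq_one_comm.1 hU, Matrix.one_mul, trace_sub,
    trace_one, trace_eq_rank_of_isIdempotentElem hP.isIdempotentElem]

theorem trace_mul_one_sub_nonneg (hU : Uᵀ * U = 1) (ha : 0 ≤ a) {P : Matrix d d ℝ}
    (hP : IsStarProjection P) : 0 ≤ (U * diagonal a * Uᵀ * (1 - P)).trace := by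
  rw [trace_mul_diagonal_mul_mul]
  exact Finset.sum_nonneg fun c _ ↦ mul_nonneg (ha c)
    (diag_mem_Icc_of_isStarProjection (isStarProjection_transpose_mul_one_sub_mul hU hP) c).1

theorem sum_le_trace_mul_one_sub (hU : Uᵀ * U = 1) (ha : 0 ≤ a) {P : Matrix d d ℝ}
    (hP : IsStarProjection P) {T : Finset d} (hT : ∀ i ∈ T, ∀ j ∉ T, a i ≤ a j)
    (hTP : P.rank ≤ Tᶜ.card) :
    ∑ c ∈ T, a c ≤ (U * diagonal a * Uᵀ * (1 - P)).trace := by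
  rw [trace_mul_diagonal_mul_mul]
  refine sum_le_sum_mul_of_card_le_sum ha (diag_mem_Icc_of_isStarProjection
    (isStarProjection_transpose_mul_one_sub_mul hU hP)) hT ?_
  calc (T.card : ℝ) ≤ Fintype.card d - P.rank := by
        rw [le_sub_iff_add_le, ← T.card_add_card_compl]
        exact_mod_cast Nat.add_le_add_left hTP _
    _ = ∑ c, (Uᵀ * (1 - P) * U) c c := (trace_transpose_mul_one_sub_mul hU hP).symm

theorem sum_le_integral_trace_mul_one_sub {Ω : Type*} [MeasurableSpace Ω] {μ : Measure Ω}
    [IsProbabilityMeasure μ] (hU : Uᵀ * U = 1) (ha : 0 ≤ a) {P : Ω → Matrix d d ℝ}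
    (hP : ∀ ω, IsStarProjection (P ω))
    (hint : Integrable (fun ω ↦ (U * diagonal a * Uᵀ * (1 - P ω)).trace) μ)
    {T : Finset d} (hT : ∀ i ∈ T, ∀ j ∉ T, a i ≤ a j)
    (hTP : ∀ ω, (P ω).rank ≤ Tᶜ.card) :
    ∑ c ∈ T, a c ≤ ∫ ω, (U * diagonal a * Uᵀ * (1 - P ω)).trace ∂μ := by
  simpa only [integral_const, probReal_univ, one_smul] using
    integral_mono (integrable_const (∑ c ∈ T, a c)) hint
      fun ω ↦ sum_le_trace_mul_one_sub hU ha (hP ω) hT (hTP ω)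

theorem ofReal_trace_mul_one_sub_le (hU : Uᵀ * U = 1) (ha : 0 ≤ a) {P : Matrix d d ℝ}
    (hP : IsStarProjection P) {x : m → d → ℝ} (hPx : ∀ i, P *ᵥ x i = x i) :
    ENNReal.ofReal (U * diagonal a * Uᵀ * (1 - P)).trace ≤
      ∑ c, ENNReal.ofReal (a c) * rowSpaceSqDist c (sampleColumn fun i ↦ Uᵀ *ᵥ x i) := by
  have hN := isStarProjection_transpose_mul_one_sub_mul hU hP
  have mulVec_row (i : m) : (Uᵀ * (1 - P) * U) *ᵥ (Uᵀ *ᵥ x i) = 0 := by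
    rw [mulVec_mulVec, Matrix.mul_assoc, mul_eq_one_comm.1 hU, Matrix.mul_one, ← mulVec_mulVec,
      sub_mulVec, one_mulVec, hPx, sub_self, mulVec_zero]
  rw [trace_mul_diagonal_mul_mul, ENNReal.ofReal_sum_of_nonneg fun c _ ↦
    mul_nonneg (ha c) (diag_mem_Icc_of_isStarProjection hN c).1]
  refine Finset.sum_le_sum fun c _ ↦ ?_
  rw [ENNReal.ofReal_mul (ha c)]
  gcongr
  exact ofReal_diag_le_rowSpaceSqDist hN mulVec_row c

theorem lintegral_trace_mul_one_sub_le {Ω : Type*} [MeasurableSpace Ω] {μ : Measure Ω}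
    [IsFiniteMeasure μ] (hU : Uᵀ * U = 1) (ha : 0 ≤ a) {X : m → Ω → d → ℝ}
    (hX : ∀ i, Measurable (X i))
    (hX_gauss : ∀ v : m → d → ℝ, μ.map (fun ω ↦ ∑ i, v i ⬝ᵥ X i ω) =
      gaussianReal 0 (∑ i, v i ⬝ᵥ (U * diagonal a * Uᵀ) *ᵥ v i).toNNReal)
    {P : Ω → Matrix d d ℝ} (hP : ∀ ω, IsStarProjection (P ω))
    (hPX : ∀ ω i, P ω *ᵥ X i ω = X i ω) {S : Finset d} (hS : S.card + 1 < Fintype.card m) :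
    ∫⁻ ω, ENNReal.ofReal (U * diagonal a * Uᵀ * (1 - P ω)).trace ∂μ ≤
      (1 + S.card / (Fintype.card m - S.card - 1 : ℕ)) * ∑ c ∈ Sᶜ, ENNReal.ofReal (a c) := by
  have enorm_sqrt_sq (c : d) : ENNReal.ofReal (a c) = ‖√(a c)‖ₑ ^ 2 := by
    rw [Real.enorm_of_nonneg (Real.sqrt_nonneg _), ← ENNReal.ofReal_pow (Real.sqrt_nonneg _),
      Real.sq_sqrt (ha c)]
  have hY := measurable_sampleColumn_mulVec Uᵀ hX
  calc ∫⁻ ω, ENNReal.ofReal (U * diagonal a * Uᵀ * (1 - P ω)).trace ∂μ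
      ≤ ∫⁻ ω, ∑ c, ENNReal.ofReal (a c) *
          rowSpaceSqDist c (sampleColumn fun i ↦ Uᵀ *ᵥ X i ω) ∂μ :=
        lintegral_mono fun ω ↦ ofReal_trace_mul_one_sub_le hU ha (hP ω) (hPX ω)
    _ = ∑ c, ENNReal.ofReal (a c) * ∫⁻ Y, rowSpaceSqDist c Y
          ∂Measure.pi (fun c ↦ isotropicGaussian (EuclideanSpace ℝ m) √(a c)) := by
        have dist_measurable (c : d) :
            Measurable fun ω ↦ rowSpaceSqDist c (sampleColumn fun i ↦ Uᵀ *ᵥ X i ω) :=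
          (measurable_rowSpaceSqDist c).comp hY
        rw [lintegral_finsetSum _ fun c _ ↦ (dist_measurable c).const_mul _,
          ← map_sampleColumn_eq_pi_isotropicGaussian hU ha hX hX_gauss]
        simp_rw [lintegral_const_mul _ (dist_measurable _),
          lintegral_map (measurable_rowSpaceSqDist _) hY]
    _ ≤ (1 + S.card / (Fintype.card m - S.card - 1 : ℕ)) * ∑ c ∈ Sᶜ, ENNReal.ofReal (a c) := by
        simp_rw [enorm_sqrt_sq]
        rw [← finrank_euclideanSpace (𝕜 := ℝ) (ι := m)] at hS ⊢
        exact sum_enorm_sq_mul_lintegral_rowSpaceSqDist_le _ hS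

theorem integral_trace_mul_one_sub_le {Ω : Type*} [MeasurableSpace Ω] {μ : Measure Ω}
    [IsFiniteMeasure μ] (hU : Uᵀ * U = 1) (ha : 0 ≤ a) {X : m → Ω → d → ℝ}
    (hX : ∀ i, Measurable (X i))
    (hX_gauss : ∀ v : m → d → ℝ, μ.map (fun ω ↦ ∑ i, v i ⬝ᵥ X i ω) =
      gaussianReal 0 (∑ i, v i ⬝ᵥ (U * diagonal a * Uᵀ) *ᵥ v i).toNNReal)
    {P : Ω → Matrix d d ℝ} (hP : ∀ ω, IsStarProjection (P ω))
    (hPX : ∀ ω i, P ω *ᵥ X i ω = X i ω)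
    (hint : Integrable (fun ω ↦ (U * diagonal a * Uᵀ * (1 - P ω)).trace) μ)
    {k : ℕ} {T : Finset d} (hT : Tᶜ.card ≤ k) (hk : k + 1 < Fintype.card m) :
    ∫ ω, (U * diagonal a * Uᵀ * (1 - P ω)).trace ∂μ ≤
      ((Fintype.card m : ℝ) - 1) / (Fintype.card m - k - 1) * ∑ c ∈ T, a c := by
  have ratio_nonneg : 0 ≤ ((Fintype.card m : ℝ) - 1) / (Fintype.card m - k - 1) := by
    have : (k : ℝ) + 1 < Fintype.card m := by exact_mod_cast hk
    exact div_nonneg (by linarith [k.cast_nonneg (α := ℝ)]) (by linarith)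
  rw [← ENNReal.ofReal_le_ofReal_iff
    (mul_nonneg ratio_nonneg (Finset.sum_nonneg fun c _ ↦ ha c)),
    ofReal_integral_eq_lintegral_ofReal hint
      (.of_forall fun ω ↦ trace_mul_one_sub_nonneg hU ha (hP ω)),
    ENNReal.ofReal_mul ratio_nonneg, ENNReal.ofReal_sum_of_nonneg fun c _ ↦ ha c,
    ← one_add_div_eq_ofReal hk]
  refine (lintegral_trace_mul_one_sub_le hU ha hX hX_gauss hP hPX
    (S := Tᶜ) (by lia)).trans ?_
  rw [compl_compl]
  gcongr

end RiskBounds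

/-- **Two-sided bounds on the noiseless optimal risk.** Let `Σ_H ⪰ 0` with eigenvalues
`eig 0 ≥ eig 1 ≥ …` (eigendecomposition with orthogonal `U`), let `X̃₁,…,X̃ₙ` be i.i.d.
`N(0, Σ_H)` (characterized through joint linear marginals), and let `P_n(ω)` be the
orthogonal projection onto `span(X̃₁(ω),…,X̃ₙ(ω))`. With `R_k = Σ_{j ≥ k} eig j`
(0-indexed tails, corresponding to `Σ_{j > k} λ_j` in 1-indexed notation), for every
`k` with `k + 1 < n`: `R_n ≤ E[Tr(Σ_H(I - P_n))] ≤ ((n-1)/(n-k-1)) R_k`. -/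
theorem noiseless_risk_two_sided (n d : ℕ) (hn : 0 < n)
    {Ω : Type*} [MeasurableSpace Ω] (μ : Measure Ω) [IsProbabilityMeasure μ]
    (SigH : Matrix (Fin d) (Fin d) ℝ) (hSigH : SigH.PosSemidef)
    (eig : Fin d → ℝ) (heig : ∀ i j : Fin d, i ≤ j → eig j ≤ eig i)
    (U : Matrix (Fin d) (Fin d) ℝ) (hU : Uᵀ * U = 1)
    (hdecomp : SigH = U * Matrix.diagonal eig * Uᵀ)
    (Xt : Fin n → Ω → (Fin d → ℝ)) (hXtmeas : ∀ i, Measurable (Xt i))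
    (hgauss : ∀ v : Fin n → (Fin d → ℝ),
      μ.map (fun ω => ∑ i, v i ⬝ᵥ Xt i ω) =
        gaussianReal 0 (Real.toNNReal (∑ i, v i ⬝ᵥ SigH.mulVec (v i))))
    (P : Ω → Matrix (Fin d) (Fin d) ℝ)
    (hPidem : ∀ ω, P ω * P ω = P ω) (hPsymm : ∀ ω, (P ω)ᵀ = P ω)
    (hPrange : ∀ ω (z : Fin d → ℝ),
      (∃ l : Fin n → ℝ, z = ∑ i, l i • Xt i ω) ↔ (P ω).mulVec z = z)
    (R : ℕ → ℝ)
    (hR : ∀ k : ℕ, R k = ∑ j ∈ Finset.univ.filter (fun j : Fin d => k ≤ (j : ℕ)), eig j)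
    (hint : Integrable
      (fun ω => (SigH * ((1 : Matrix (Fin d) (Fin d) ℝ) - P ω)).trace) μ) :
    ∀ k : ℕ, k + 1 < n →
      R n ≤ (∫ ω, (SigH * ((1 : Matrix (Fin d) (Fin d) ℝ) - P ω)).trace ∂μ) ∧
      (∫ ω, (SigH * ((1 : Matrix (Fin d) (Fin d) ℝ) - P ω)).trace ∂μ) ≤
        (((n : ℝ) - 1) / ((n : ℝ) - (k : ℝ) - 1)) * R k := by
  subst hdecomp
  have heig_nonneg : 0 ≤ eig := nonneg_of_posSemidef_mul_diagonal_mul_transpose hU hSigH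
  have hP (ω : Ω) : IsStarProjection (P ω) := ⟨hPidem ω, hPsymm ω⟩
  have mem_span_iff (ω : Ω) (z : Fin d → ℝ) :
      z ∈ Submodule.span ℝ (Set.range fun i ↦ Xt i ω) ↔ P ω *ᵥ z = z := by
    rw [← hPrange, Submodule.mem_span_range_iff_exists_fun]
    simp only [eq_comm]
  have hPX (ω : Ω) (i : Fin n) : P ω *ᵥ Xt i ω = Xt i ω :=
    (mem_span_iff ω _).1 (Submodule.subset_span ⟨i, rfl⟩)
  have rank_le (ω : Ω) : (P ω).rank ≤ n :=
    (rank_le_card_of_mulVec_mem_span fun z ↦ (mem_span_iff ω _).2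
      (by rw [mulVec_mulVec, hPidem])).trans_eq (Fintype.card_fin n)
  have card_compl_tail (k : ℕ) :
      (Finset.univ.filter fun j : Fin d ↦ k ≤ (j : ℕ))ᶜ.card = min d k := by
    simp [Finset.compl_filter, Fin.card_filter_val_lt]
  intro k hk
  rw [hR, hR]
  constructor
  · refine sum_le_integral_trace_mul_one_sub hU heig_nonneg hP hint
      (fun i hi j hj ↦ heig j i (by simp only [Finset.mem_filter_univ] at hi hj; lia)) fun ω ↦ ?_
    exact (le_min (by simpa using (P ω).rank_le_card_width) (rank_le ω)).trans_eq
      (card_compl_tail n).symm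
  · simpa only [Fintype.card_fin] using
      integral_trace_mul_one_sub_le hU heig_nonneg hXtmeas hgauss hP hPX hint
        ((card_compl_tail k).trans_le (min_le_right d k)) (hk.trans_eq (Fintype.card_fin n).symm)
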